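/- There exists an infinitely differentiable, strictly increasing function ρ₀ : ℝ → ℝ such that a < ρ₀(z) < b for all z ∈ ℝ, ρ₀''(z) = f(ρ₀(z)) for all z ∈ ℝ, ρ₀'(z) = (√2/2)(ρ₀(z)² − a²)(b² − ρ₀(z)²) for all z ∈ ℝ, lim_{z→−∞} ρ₀(z) = a, and lim_{z→+∞} ρ₀(z) = b. -/

import Mathlib

open Filter

/-!
Write `v(ρ) = (√2/2)(ρ² − a²)(b² − ρ²)`. Since `f = v v'`, every solution of `ρ' = v(ρ)` solves
`ρ'' = f(ρ)`, so only the first-order equation has to be solved. On `(a, b)` the field `v` is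
positive, and the inverse function of a solution is the travel time `T(x) = ∫ dt / v(t)`. As `v` is
Lipschitz and vanishes at `a` and `b`, its reciprocal is bounded below by multiples of `1 / (x - a)`
and `1 / (b - x)`, so `T` diverges logarithmically at both ends and maps `(a, b)` onto `ℝ`.
-/

open Topology Set

section IntegralCurve

variable {E : Type*} [NormedAddCommGroup E] [NormedSpace ℝ E] {v : E → E} {γ : ℝ → E}

theorem contDiff_succ_of_isIntegralCurve {n : ℕ∞} (hγ : IsIntegralCurve γ fun _ ↦ v)
    (hv : ContDiff ℝ n v) : ContDiff ℝ (n + 1) γ := by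
  have deriv_eq : deriv γ = v ∘ γ := funext fun t ↦ (hγ t).deriv
  have bootstrap {m : ℕ} (hm : (m : ℕ∞) ≤ n) (hγm : ContDiff ℝ m γ) :
      ContDiff ℝ (m + 1) γ := by
    refine contDiff_succ_iff_deriv.2 ⟨fun t ↦ (hγ t).differentiableAt, by simp, ?_⟩
    rw [deriv_eq]
    exact (hv.of_le (mod_cast hm)).comp hγm
  have contDiff_nat (m : ℕ) (hm : (m : ℕ∞) ≤ n + 1) : ContDiff ℝ m γ := by
    induction m with
    | zero => exact contDiff_zero.2 hγ.continuous
    | succ m ih =>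
      have hmn : (m : ℕ∞) ≤ n := (ENat.add_le_add_iff_right ENat.one_ne_top).1 (mod_cast hm)
      exact bootstrap hmn (ih (hmn.trans le_self_add))
  exact contDiff_iff_forall_nat_le.2 contDiff_nat

theorem deriv_deriv_of_isIntegralCurve {t : ℝ} (hγ : IsIntegralCurve γ fun _ ↦ v)
    (hv : DifferentiableAt ℝ v (γ t)) : deriv (deriv γ) t = fderiv ℝ v (γ t) (v (γ t)) := by
  have deriv_eq : deriv γ = v ∘ γ := funext fun t ↦ (hγ t).deriv
  rw [deriv_eq]
  exact (hv.hasFDerivAt.comp_hasDerivAt t (hγ t)).deriv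

end IntegralCurve

section Comparison

variable {f g f' g' : ℝ → ℝ} {a b : ℝ}

theorem monotoneOn_sub_of_deriv_le (hf : ∀ x ∈ Ioo a b, HasDerivAt f (f' x) x)
    (hg : ∀ x ∈ Ioo a b, HasDerivAt g (g' x) x) (hle : ∀ x ∈ Ioo a b, f' x ≤ g' x) :
    MonotoneOn (g - f) (Ioo a b) := by
  have hsub : ∀ x ∈ Ioo a b, HasDerivAt (g - f) (g' x - f' x) x := fun x hx ↦
    (hg x hx).sub (hf x hx)
  refine monotoneOn_of_hasDerivWithinAt_nonneg (f' := g' - f') (convex_Ioo a b)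
    (HasDerivAt.continuousOn hsub) ?_ ?_ <;> rw [interior_Ioo]
  · exact fun x hx ↦ (hsub x hx).hasDerivWithinAt
  · exact fun x hx ↦ sub_nonneg.2 (hle x hx)

theorem tendsto_nhdsLT_atTop_of_deriv_le (hab : a < b)
    (hf : ∀ x ∈ Ioo a b, HasDerivAt f (f' x) x) (hg : ∀ x ∈ Ioo a b, HasDerivAt g (g' x) x)
    (hle : ∀ x ∈ Ioo a b, f' x ≤ g' x) (hlim : Tendsto f (𝓝[<] b) atTop) :
    Tendsto g (𝓝[<] b) atTop := by
  obtain ⟨c, hc⟩ := nonempty_Ioo.2 hab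
  refine tendsto_atTop_mono' _ ?_ (tendsto_atTop_add_const_right _ (g c - f c) hlim)
  filter_upwards [Ioo_mem_nhdsLT hc.2] with x hx
  have := monotoneOn_sub_of_deriv_le hf hg hle hc ⟨hc.1.trans hx.1, hx.2⟩ hx.1.le
  simp only [Pi.sub_apply] at this
  linarith

theorem tendsto_nhdsGT_atBot_of_deriv_le (hab : a < b)
    (hf : ∀ x ∈ Ioo a b, HasDerivAt f (f' x) x) (hg : ∀ x ∈ Ioo a b, HasDerivAt g (g' x) x)
    (hle : ∀ x ∈ Ioo a b, f' x ≤ g' x) (hlim : Tendsto f (𝓝[>] a) atBot) :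
    Tendsto g (𝓝[>] a) atBot := by
  obtain ⟨c, hc⟩ := nonempty_Ioo.2 hab
  refine tendsto_atBot_mono' _ ?_ (tendsto_atBot_add_const_right _ (g c - f c) hlim)
  filter_upwards [Ioo_mem_nhdsGT hc.1] with x hx
  have := monotoneOn_sub_of_deriv_le hf hg hle ⟨hx.1, hx.2.trans hc.2⟩ hc hx.2.le
  simp only [Pi.sub_apply] at this
  linarith

end Comparison

theorem tendsto_log_sub_const_nhdsGT (a : ℝ) :
    Tendsto (fun x ↦ Real.log (x - a)) (𝓝[>] a) atBot := by
  refine Real.tendsto_log_nhdsGT_zero.comp (tendsto_nhdsWithin_iff.2 ⟨?_, ?_⟩)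
  · exact ((continuous_sub_right a).tendsto' a 0 (sub_self a)).mono_left nhdsWithin_le_nhds
  · filter_upwards [self_mem_nhdsWithin] with x hx using sub_pos.2 (by simpa using hx)

theorem tendsto_log_const_sub_nhdsLT (b : ℝ) :
    Tendsto (fun x ↦ Real.log (b - x)) (𝓝[<] b) atBot := by
  refine Real.tendsto_log_nhdsGT_zero.comp (tendsto_nhdsWithin_iff.2 ⟨?_, ?_⟩)
  · exact ((continuous_sub_left b).tendsto' b 0 (sub_self b)).mono_left nhdsWithin_le_nhds
  · filter_upwards [self_mem_nhdsWithin] with x hx using sub_pos.2 (by simpa using hx)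

theorem exists_orderIso_Ioo_of_strictMonoOn {α β : Type*} [ConditionallyCompleteLinearOrder α]
    [DenselyOrdered α] [TopologicalSpace α] [OrderTopology α] [LinearOrder β] [TopologicalSpace β]
    [OrderClosedTopology β] {T : α → β} {a b : α} (hab : a < b) (hcont : ContinuousOn T (Ioo a b))
    (hmono : StrictMonoOn T (Ioo a b)) (hbot : Tendsto T (𝓝[>] a) atBot)
    (htop : Tendsto T (𝓝[<] b) atTop) :
    ∃ e : β ≃o Ioo a b, ∀ z, T (e z) = z := by
  have hsurj : SurjOn T (Ioo a b) univ :=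
    hcont.surjOn_of_tendsto (nonempty_Ioo.2 hab)
      ((tendsto_comp_coe_Ioo_atBot hab).2 hbot) ((tendsto_comp_coe_Ioo_atTop hab).2 htop)
  let e : Ioo a b ≃o β := StrictMono.orderIsoOfSurjective ((Ioo a b).domRestrict T)
    hmono.domRestrict (surjOn_iff_surjective.1 hsurj)
  exact ⟨e.symm, e.apply_symm_apply⟩

section TravelTime

/-- The time a solution of `γ' = v γ` needs to travel from `c` to `x`. -/
noncomputable def travelTime (v : ℝ → ℝ) (c x : ℝ) : ℝ :=
  ∫ t in c..x, (v t)⁻¹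

variable {v : ℝ → ℝ} {a b c x K : ℝ}

theorem hasDerivAt_travelTime (hv : ContinuousOn v (Ioo a b)) (hpos : ∀ x ∈ Ioo a b, 0 < v x)
    (hc : c ∈ Ioo a b) (hx : x ∈ Ioo a b) : HasDerivAt (travelTime v c) (v x)⁻¹ x := by
  have hinv : ContinuousOn (fun t ↦ (v t)⁻¹) (Ioo a b) := hv.inv₀ fun t ht ↦ (hpos t ht).ne'
  exact intervalIntegral.integral_hasDerivAt_right
    (hinv.mono (ordConnected_Ioo.uIcc_subset hc hx)).intervalIntegrable
    (hinv.stronglyMeasurableAtFilter isOpen_Ioo x hx) (hinv.continuousAt (isOpen_Ioo.mem_nhds hx))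

theorem strictMonoOn_travelTime (hv : ContinuousOn v (Ioo a b))
    (hpos : ∀ x ∈ Ioo a b, 0 < v x) (hc : c ∈ Ioo a b) :
    StrictMonoOn (travelTime v c) (Ioo a b) := by
  have hderiv (x) (hx : x ∈ Ioo a b) := hasDerivAt_travelTime hv hpos hc hx
  refine strictMonoOn_of_hasDerivWithinAt_pos (f' := fun x ↦ (v x)⁻¹) (convex_Ioo a b)
    (HasDerivAt.continuousOn hderiv) ?_ ?_ <;> rw [interior_Ioo]
  · exact fun x hx ↦ (hderiv x hx).hasDerivWithinAt
  · exact fun x hx ↦ inv_pos.2 (hpos x hx)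

theorem tendsto_travelTime_nhdsLT (hv : ContinuousOn v (Ioo a b))
    (hpos : ∀ x ∈ Ioo a b, 0 < v x) (hle : ∀ x ∈ Ioo a b, v x ≤ K * (b - x))
    (hc : c ∈ Ioo a b) : Tendsto (travelTime v c) (𝓝[<] b) atTop := by
  have hK : 0 < K :=
    pos_of_mul_pos_left ((hpos c hc).trans_le (hle c hc)) (sub_nonneg.2 hc.2.le)
  have hlog : ∀ x ∈ Ioo a b,
      HasDerivAt (fun x ↦ -K⁻¹ * Real.log (b - x)) (K * (b - x))⁻¹ x := fun x hx ↦
    ((((hasDerivAt_id' x).const_sub b).log (sub_pos.2 hx.2).ne').const_mul (-K⁻¹)).congr_deriv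
      (by rw [mul_inv]; ring)
  exact tendsto_nhdsLT_atTop_of_deriv_le (hc.1.trans hc.2) hlog
    (fun x hx ↦ hasDerivAt_travelTime hv hpos hc hx)
    (fun x hx ↦ inv_anti₀ (hpos x hx) (hle x hx))
    ((tendsto_log_const_sub_nhdsLT b).const_mul_atBot_of_neg (neg_neg_of_pos (inv_pos.2 hK)))

theorem tendsto_travelTime_nhdsGT (hv : ContinuousOn v (Ioo a b))
    (hpos : ∀ x ∈ Ioo a b, 0 < v x) (hle : ∀ x ∈ Ioo a b, v x ≤ K * (x - a))
    (hc : c ∈ Ioo a b) : Tendsto (travelTime v c) (𝓝[>] a) atBot := by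
  have hK : 0 < K :=
    pos_of_mul_pos_left ((hpos c hc).trans_le (hle c hc)) (sub_nonneg.2 hc.1.le)
  have hlog : ∀ x ∈ Ioo a b,
      HasDerivAt (fun x ↦ K⁻¹ * Real.log (x - a)) (K * (x - a))⁻¹ x := fun x hx ↦
    ((((hasDerivAt_id' x).sub_const a).log (sub_pos.2 hx.1).ne').const_mul K⁻¹).congr_deriv
      (by rw [mul_inv, one_div])
  exact tendsto_nhdsGT_atBot_of_deriv_le (hc.1.trans hc.2) hlog
    (fun x hx ↦ hasDerivAt_travelTime hv hpos hc hx)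
    (fun x hx ↦ inv_anti₀ (hpos x hx) (hle x hx))
    ((tendsto_log_sub_const_nhdsGT a).const_mul_atBot (inv_pos.2 hK))

end TravelTime

theorem exists_isIntegralCurve_heteroclinic {v : ℝ → ℝ} {a b : ℝ} {K : NNReal} (hab : a < b)
    (hv : LipschitzOnWith K v (Icc a b)) (hva : v a = 0) (hvb : v b = 0)
    (hpos : ∀ x ∈ Ioo a b, 0 < v x) :
    ∃ γ : ℝ → ℝ, IsIntegralCurve γ (fun _ ↦ v) ∧ (∀ t, γ t ∈ Ioo a b) ∧
      Tendsto γ atBot (𝓝 a) ∧ Tendsto γ atTop (𝓝 b) := by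
  have hcont : ContinuousOn v (Ioo a b) := hv.continuousOn.mono Ioo_subset_Icc_self
  have hle_left : ∀ x ∈ Ioo a b, v x ≤ K * (x - a) := fun x hx ↦ by
    have := hv.le_add_mul (Ioo_subset_Icc_self hx) (left_mem_Icc.2 hab.le)
    rwa [hva, zero_add, Real.dist_eq, abs_of_pos (sub_pos.2 hx.1)] at this
  have hle_right : ∀ x ∈ Ioo a b, v x ≤ K * (b - x) := fun x hx ↦ by
    have := hv.le_add_mul (Ioo_subset_Icc_self hx) (right_mem_Icc.2 hab.le)
    rwa [hvb, zero_add, dist_comm, Real.dist_eq, abs_of_pos (sub_pos.2 hx.2)] at this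
  obtain ⟨c, hc⟩ := nonempty_Ioo.2 hab
  have hderiv (x) (hx : x ∈ Ioo a b) := hasDerivAt_travelTime hcont hpos hc hx
  obtain ⟨e, he⟩ := exists_orderIso_Ioo_of_strictMonoOn hab (HasDerivAt.continuousOn hderiv)
    (strictMonoOn_travelTime hcont hpos hc) (tendsto_travelTime_nhdsGT hcont hpos hle_left hc)
    (tendsto_travelTime_nhdsLT hcont hpos hle_right hc)
  refine ⟨fun t ↦ e t, fun t ↦ ?_, fun t ↦ (e t).2, ?_, ?_⟩
  · have hγ : ContinuousAt (fun t ↦ (e t : ℝ)) t :=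
      (continuous_subtype_val.comp e.continuous).continuousAt
    simpa only [inv_inv] using HasDerivAt.of_local_left_inverse hγ (hderiv (e t) (e t).2)
      (inv_ne_zero (hpos (e t) (e t).2).ne') (Eventually.of_forall he)
  · exact ((tendsto_Ioo_atBot).1 e.tendsto_atBot).mono_right nhdsWithin_le_nhds
  · exact ((tendsto_Ioo_atTop).1 e.tendsto_atTop).mono_right nhdsWithin_le_nhds

section ProfileField

/-- The vector field of the first-order profile equation: the square root of `2 W`, where
`W = (ρ² - a²)² (ρ² - b²)² / 4` is the primitive of `f` vanishing at the wells `a` and `b`. -/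
noncomputable def profileField (a b x : ℝ) : ℝ :=
  Real.sqrt 2 / 2 * (x ^ 2 - a ^ 2) * (b ^ 2 - x ^ 2)

variable {a b x : ℝ}

theorem contDiff_profileField {n : WithTop ℕ∞} : ContDiff ℝ n (profileField a b) := by
  unfold profileField
  fun_prop

theorem profileField_pos (ha : 0 ≤ a) (hx : x ∈ Ioo a b) : 0 < profileField a b x := by
  have hxa : 0 < x ^ 2 - a ^ 2 := sub_pos.2 (pow_lt_pow_left₀ hx.1 ha two_ne_zero)
  have hxb : 0 < b ^ 2 - x ^ 2 :=
    sub_pos.2 (pow_lt_pow_left₀ hx.2 (ha.trans hx.1.le) two_ne_zero)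
  unfold profileField
  positivity

theorem hasDerivAt_profileField :
    HasDerivAt (profileField a b) (Real.sqrt 2 * x * (a ^ 2 + b ^ 2 - 2 * x ^ 2)) x := by
  have hsq : HasDerivAt (fun x : ℝ ↦ x ^ 2) (2 * x) x := by simpa using hasDerivAt_pow 2 x
  exact (((hsq.sub_const (a ^ 2)).const_mul (Real.sqrt 2 / 2)).mul
    (hsq.const_sub (b ^ 2))).congr_deriv (by ring)

theorem profileField_mul_deriv_profileField :
    profileField a b x * deriv (profileField a b) x =
      (x ^ 2 - a ^ 2) * (x ^ 2 - b ^ 2) * (2 * x ^ 2 - a ^ 2 - b ^ 2) * x := by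
  have hsqrt : Real.sqrt 2 ^ 2 = 2 := Real.sq_sqrt zero_le_two
  rw [hasDerivAt_profileField.deriv, profileField]
  linear_combination
    x * (a ^ 2 + b ^ 2 - 2 * x ^ 2) * (x ^ 2 - a ^ 2) * (b ^ 2 - x ^ 2) / 2 * hsqrt

end ProfileField

/-- For `0 < a < b` and
`f(ρ) = (ρ² − a²)(ρ² − b²)(2ρ² − a² − b²)ρ`, there exists a smooth, strictly increasing
heteroclinic profile `ρ₀ : ℝ → ℝ` with `a < ρ₀ < b`, `ρ₀'' = f(ρ₀)`,
`ρ₀' = (√2/2)(ρ₀² − a²)(b² − ρ₀²)`, `ρ₀(−∞) = a` and `ρ₀(+∞) = b`. -/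
theorem statement2 (a b : ℝ) (ha : 0 < a) (hab : a < b) :
    ∃ ρ₀ : ℝ → ℝ, ContDiff ℝ (⊤ : ℕ∞) ρ₀ ∧ StrictMono ρ₀ ∧
      (∀ z, a < ρ₀ z ∧ ρ₀ z < b) ∧
      (∀ z, deriv (deriv ρ₀) z =
        ((ρ₀ z) ^ 2 - a ^ 2) * ((ρ₀ z) ^ 2 - b ^ 2)
          * (2 * (ρ₀ z) ^ 2 - a ^ 2 - b ^ 2) * ρ₀ z) ∧
      (∀ z, deriv ρ₀ z = Real.sqrt 2 / 2 * ((ρ₀ z) ^ 2 - a ^ 2) * (b ^ 2 - (ρ₀ z) ^ 2)) ∧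
      Tendsto ρ₀ atBot (nhds a) ∧ Tendsto ρ₀ atTop (nhds b) := by
  obtain ⟨K, hK⟩ := (contDiff_profileField (a := a) (b := b)).contDiffOn.exists_lipschitzOnWith
    one_ne_zero (convex_Icc a b) isCompact_Icc
  obtain ⟨ρ, hρ, hmem, hbot, htop⟩ := exists_isIntegralCurve_heteroclinic hab hK
    (by simp [profileField]) (by simp [profileField]) fun x hx ↦ profileField_pos ha.le hx
  have hsmooth : ContDiff ℝ (⊤ : ℕ∞) ρ :=
    contDiff_succ_of_isIntegralCurve (n := ⊤) hρ contDiff_profileField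
  have hmono : StrictMono ρ :=
    strictMono_of_hasDerivAt_pos hρ fun z ↦ profileField_pos ha.le (hmem z)
  have hsecond (z : ℝ) : deriv (deriv ρ) z =
      profileField a b (ρ z) * deriv (profileField a b) (ρ z) := by
    rw [deriv_deriv_of_isIntegralCurve hρ hasDerivAt_profileField.differentiableAt,
      fderiv_eq_smul_deriv, smul_eq_mul]
  exact ⟨ρ, hsmooth, hmono, hmem,
    fun z ↦ (hsecond z).trans profileField_mul_deriv_profileField,
    fun z ↦ (hρ z).deriv, hbot, htop⟩
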